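/- Kirchhoff's effective-resistance formula: Let G=(V,E) be a finite connected simple graph, give every edge unit conductance, and let e = {x,y} ∈ E. Then the number of spanning trees of G containing e equals R_eff(x ↔ y) times the total number of spanning trees of G; equivalently, if T is a uniformly random spanning tree of G then P(e ∈ T) = R_eff(x ↔ y). -/

import Mathlib

/-!
Kirchhoff's effective-resistance formula.

All edges of the finite connected simple graph `G` have unit conductance.  A
flow is modelled as an antisymmetric function `θ : V → V → ℝ` vanishing on
non-adjacent pairs; since it vanishes off edges, sums over all vertices agree
with sums over neighbours, and `(1/2) * ∑ u, ∑ v, θ u v ^ 2` equals the sum of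
`θ(e)²` over undirected edges (the energy of `θ`).  The effective resistance
`R_eff(x ↔ y)` is the infimum of the energies of unit-strength flows from `x`
to `y`.  A spanning tree is a subset `T` of the edge set such that the graph
with edge set `T` is connected and acyclic.
-/

open Finset

variable {V : Type} [Fintype V] [DecidableEq V]

/-- `θ` is a flow of strength 1 from `a` to `z` in `G` (unit conductances). -/
def IsUnitFlow (G : SimpleGraph V) (a z : V) (θ : V → V → ℝ) : Prop :=
  (∀ x y, θ x y = -θ y x) ∧
  (∀ x y, ¬G.Adj x y → θ x y = 0) ∧
  (∀ x, x ≠ a → x ≠ z → ∑ y, θ x y = 0) ∧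
  (∑ y, θ a y = 1)

/-- The energy of a flow: the sum of `θ(e)²` over undirected edges. -/
noncomputable def flowEnergy (θ : V → V → ℝ) : ℝ :=
  (1 / 2) * ∑ u, ∑ v, θ u v ^ 2

/-- Effective resistance between `a` and `z` (unit conductances). -/
noncomputable def effRes (G : SimpleGraph V) (a z : V) : ℝ :=
  sInf {E : ℝ | ∃ θ : V → V → ℝ, IsUnitFlow G a z θ ∧ E = flowEnergy θ}

/-- `T` is (the edge set of) a spanning tree of `G`. -/
def IsSpanningTree (G : SimpleGraph V) (T : Finset (Sym2 V)) : Prop :=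
  (T : Set (Sym2 V)) ⊆ G.edgeSet ∧ (SimpleGraph.fromEdgeSet (T : Set (Sym2 V))).IsTree

open scoped Classical in
/-- In a tree, exactly one edge at `u` separates `u` from a vertex `x ≠ u`. -/
lemma kf_existsUnique (H : SimpleGraph V) (hH : H.IsTree) (u x : V) (hux : u ≠ x) :
    ∃ v, H.Adj u v ∧ ∀ w, H.Adj u w →
      (¬ (H.deleteEdges {s(u, w)}).Reachable x u ↔ w = v) := by
  obtain ⟨p, hp, -⟩ := hH.existsUnique_path u x
  cases p with
  | nil => exact absurd rfl hux
  | @cons _ v _ h q =>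
    rw [SimpleGraph.Walk.cons_isPath_iff] at hp
    obtain ⟨hq, huq⟩ := hp
    have hqe : ∀ w, s(u, w) ∉ q.edges := fun w hw =>
      huq (q.fst_mem_support_of_mem_edges hw)
    refine ⟨v, h, fun w hw => ⟨fun hn => ?_, fun hwv hr => ?_⟩⟩
    · by_contra hne
      apply hn
      refine SimpleGraph.Reachable.symm ?_
      refine ((SimpleGraph.Walk.cons h q).toDeleteEdge s(u, w) ?_).reachable
      simp only [SimpleGraph.Walk.edges_cons, List.mem_cons, not_or]
      refine ⟨?_, hqe w⟩
      intro heq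
      exact hne (Sym2.congr_right.mp heq)
    · subst hwv
      have hb := SimpleGraph.isAcyclic_iff_forall_adj_isBridge.mp hH.isAcyclic h
      rw [SimpleGraph.isBridge_iff] at hb
      apply hb
      have h1 := (q.toDeleteEdge s(u, w) (hqe w)).reachable
      exact (h1.trans hr).symm

/-- Reachability through a set of edges. -/
def kfR (F : Finset (Sym2 V)) (a b : V) : Prop :=
  (SimpleGraph.fromEdgeSet (F : Set (Sym2 V))).Reachable a b

/-- Spanning forests with exactly two components. -/
def KfTwoForest (G : SimpleGraph V) (F : Finset (Sym2 V)) : Prop :=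
  (F : Set (Sym2 V)) ⊆ G.edgeSet ∧
  (SimpleGraph.fromEdgeSet (F : Set (Sym2 V))).IsAcyclic ∧
  ∀ a b c, kfR F a b ∨ kfR F b c ∨ kfR F a c

lemma kf_reach_insert (F : Finset (Sym2 V)) (u v w : V)
    (h : kfR (insert s(u, v) F) w u) : kfR F w u ∨ kfR F w v := by
  suffices hs : ∀ c, (SimpleGraph.fromEdgeSet
      ((insert s(u, v) F : Finset (Sym2 V)) : Set (Sym2 V))).Walk w c → c = u →
      kfR F w u ∨ kfR F w v by
    obtain ⟨p⟩ := h
    exact hs u p rfl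
  intro c p
  clear h
  induction p with
  | nil =>
    rintro rfl
    exact Or.inl (SimpleGraph.Reachable.refl _)
  | @cons a b c hab q ih =>
    intro hc
    have ih := ih hc
    rw [SimpleGraph.fromEdgeSet_adj] at hab
    obtain ⟨h1, hne⟩ := hab
    simp only [Finset.coe_insert, Set.mem_insert_iff, Finset.mem_coe] at h1
    rcases h1 with h1 | h1
    · rcases Sym2.eq_iff.mp h1 with ⟨h2, -⟩ | ⟨h2, -⟩
      · rw [h2]; exact Or.inl (SimpleGraph.Reachable.refl _)
      · rw [h2]; exact Or.inr (SimpleGraph.Reachable.refl _)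
    · have hr : kfR F a b := SimpleGraph.Adj.reachable
        (by rw [SimpleGraph.fromEdgeSet_adj]; exact ⟨by simpa using h1, hne⟩)
      exact ih.imp hr.trans hr.trans

lemma kf_insert_iff (G : SimpleGraph V) (F : Finset (Sym2 V)) (u v : V) (huv : G.Adj u v) :
    (s(u, v) ∉ F ∧ IsSpanningTree G (insert s(u, v) F)) ↔ (KfTwoForest G F ∧ ¬ kfR F u v) := by
  have hsup : SimpleGraph.fromEdgeSet ((insert s(u, v) F : Finset (Sym2 V)) : Set (Sym2 V)) =
      SimpleGraph.fromEdgeSet (F : Set (Sym2 V)) ⊔ SimpleGraph.edge u v := by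
    rw [Finset.coe_insert, Set.insert_eq, Set.union_comm, SimpleGraph.edge,
      SimpleGraph.fromEdgeSet_union]
  have hle : SimpleGraph.fromEdgeSet (F : Set (Sym2 V)) ≤
      SimpleGraph.fromEdgeSet ((insert s(u, v) F : Finset (Sym2 V)) : Set (Sym2 V)) :=
    hsup ▸ le_sup_left
  have hadj : (SimpleGraph.fromEdgeSet
      ((insert s(u, v) F : Finset (Sym2 V)) : Set (Sym2 V))).Adj u v := by
    rw [SimpleGraph.fromEdgeSet_adj]; exact ⟨by simp, huv.ne⟩
  constructor
  · rintro ⟨hnot, hsub, htree⟩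
    refine ⟨⟨?_, htree.isAcyclic.anti hle, ?_⟩, ?_⟩
    · exact fun e he => hsub (by simpa using Or.inr he)
    · have key : ∀ w, kfR F w u ∨ kfR F w v := fun w =>
        kf_reach_insert F u v w (htree.connected.preconnected w u)
      have tr : ∀ a b c, kfR F a c → kfR F b c → kfR F a b := fun a b c h1 h2 => h1.trans h2.symm
      intro a b c
      rcases key a with ha | ha <;> rcases key b with hb | hb <;> rcases key c with hc | hc <;>
        first
        | exact Or.inl (tr _ _ _ ha hb)
        | exact Or.inr (Or.inl (tr _ _ _ hb hc))
        | exact Or.inr (Or.inr (tr _ _ _ ha hc))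
    · have hb := SimpleGraph.isAcyclic_iff_forall_adj_isBridge.mp htree.isAcyclic hadj
      rw [SimpleGraph.isBridge_iff, SimpleGraph.deleteEdges_fromEdgeSet] at hb
      unfold kfR
      convert hb using 3
      ext e
      simp only [Finset.coe_insert, Set.mem_sdiff, Set.mem_insert_iff, Set.mem_singleton_iff,
        Finset.mem_coe]
      constructor
      · intro he
        exact ⟨Or.inr he, fun h => hnot (h ▸ he)⟩
      · rintro ⟨h | h, h'⟩
        · exact absurd h h'
        · exact h
  · rintro ⟨⟨hsub, hac, h3⟩, hn⟩
    refine ⟨fun hmem => hn (SimpleGraph.Adj.reachable ?_), ?_, ?_⟩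
    · rw [SimpleGraph.fromEdgeSet_adj]; exact ⟨by simpa using hmem, huv.ne⟩
    · intro e he
      simp only [Finset.coe_insert, Set.mem_insert_iff, Finset.mem_coe] at he
      rcases he with rfl | he
      · exact huv
      · exact hsub he
    · have key : ∀ w, (SimpleGraph.fromEdgeSet
          ((insert s(u, v) F : Finset (Sym2 V)) : Set (Sym2 V))).Reachable w u := by
        intro w
        rcases h3 u v w with h | h | h
        · exact absurd h hn
        · exact (h.symm.mono hle).trans hadj.reachable.symm
        · exact h.symm.mono hle
      have : Nonempty V := ⟨u⟩
      refine ⟨⟨fun a b => (key a).trans (key b).symm⟩, ?_⟩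
      rw [hsup]
      exact hac.sup_edge_of_not_reachable hn

open scoped Classical in
/-- The unit current along the path from `x` to `y` in the tree `T`. -/
noncomputable def kfPathFlow (x y : V) (T : Finset (Sym2 V)) (u v : V) : ℝ :=
  if s(u, v) ∈ T then
    (if kfR (T.erase s(u, v)) x u then 1 else 0) - (if kfR (T.erase s(u, v)) y u then 1 else 0)
  else 0

open scoped Classical in
/-- Number of two-component forests separating `x` from `y` with `u` on the side of `x`. -/
noncomputable def kfPot (G : SimpleGraph V) (x y u : V) : ℝ :=
  ∑ F : Finset (Sym2 V), if KfTwoForest G F ∧ ¬ kfR F x y ∧ kfR F x u then 1 else 0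

open scoped Classical in
lemma kf_pot_sub (G : SimpleGraph V) (x y u v : V) (huv : G.Adj u v) :
    kfPot G x y u - kfPot G x y v =
      ∑ T ∈ Finset.univ.filter (fun T : Finset (Sym2 V) => IsSpanningTree G T),
        kfPathFlow x y T u v := by
  have h1 : ∑ T ∈ Finset.univ.filter (fun T : Finset (Sym2 V) => IsSpanningTree G T),
        kfPathFlow x y T u v =
      ∑ T ∈ Finset.univ.filter (fun T : Finset (Sym2 V) => IsSpanningTree G T ∧ s(u, v) ∈ T),
        ((if kfR (T.erase s(u, v)) x u then (1:ℝ) else 0) -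
          (if kfR (T.erase s(u, v)) y u then 1 else 0)) := by
    rw [← Finset.filter_filter, Finset.sum_filter (fun T => s(u, v) ∈ T)]
    rfl
  have h2 : ∑ T ∈ Finset.univ.filter (fun T : Finset (Sym2 V) => IsSpanningTree G T ∧ s(u, v) ∈ T),
        ((if kfR (T.erase s(u, v)) x u then (1:ℝ) else 0) -
          (if kfR (T.erase s(u, v)) y u then 1 else 0)) =
      ∑ F ∈ Finset.univ.filter (fun F : Finset (Sym2 V) => KfTwoForest G F ∧ ¬ kfR F u v),
        ((if kfR F x u then (1:ℝ) else 0) - (if kfR F y u then 1 else 0)) := by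
    refine Finset.sum_bij' (fun T _ => T.erase s(u, v)) (fun F _ => insert s(u, v) F)
      ?_ ?_ ?_ ?_ ?_
    · intro T hT
      simp only [Finset.mem_filter, Finset.mem_univ, true_and] at hT ⊢
      rw [← kf_insert_iff G _ u v huv, Finset.insert_erase hT.2]
      exact ⟨Finset.notMem_erase _ _, hT.1⟩
    · intro F hF
      simp only [Finset.mem_filter, Finset.mem_univ, true_and] at hF ⊢
      rw [← kf_insert_iff G _ u v huv] at hF
      exact ⟨hF.2, Finset.mem_insert_self _ _⟩
    · intro T hT
      simp only [Finset.mem_filter, Finset.mem_univ, true_and] at hT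
      exact Finset.insert_erase hT.2
    · intro F hF
      simp only [Finset.mem_filter, Finset.mem_univ, true_and] at hF
      rw [← kf_insert_iff G _ u v huv] at hF
      exact Finset.erase_insert hF.1
    · intro T hT
      rfl
  rw [h1, h2, kfPot, kfPot, ← Finset.sum_sub_distrib, Finset.sum_filter]
  refine Finset.sum_congr rfl fun F _ => ?_
  by_cases hF : KfTwoForest G F
  · have h3 := hF.2.2
    have tr : ∀ a b c, kfR F a b → kfR F b c → kfR F a c := fun a b c h h' => h.trans h'
    have sy : ∀ a b, kfR F a b → kfR F b a := fun a b h => h.symm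
    have a1 := h3 x u v
    have a2 := h3 y u v
    have a3 := h3 x y u
    have a4 := h3 x y v
    simp only [hF, true_and]
    by_cases c1 : kfR F u v <;> by_cases c2 : kfR F x y <;> by_cases c3 : kfR F x u <;>
      by_cases c4 : kfR F x v <;> by_cases c5 : kfR F y u <;> simp [c1, c2, c3, c4, c5] <;> grind
  · simp [hF]

open scoped Classical in
lemma kf_path_node (G : SimpleGraph V) (x y : V) (T : Finset (Sym2 V))
    (hT : IsSpanningTree G T) (u : V) :
    ∑ v, kfPathFlow x y T u v = (if u = x then 1 else 0) - (if u = y then 1 else 0) := by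
  set H := SimpleGraph.fromEdgeSet (T : Set (Sym2 V)) with hH
  have hadj : ∀ v, s(u, v) ∈ T ↔ H.Adj u v := by
    intro v
    rw [hH, SimpleGraph.fromEdgeSet_adj]
    refine ⟨fun h => ⟨by simpa using h, ?_⟩, fun h => by simpa using h.1⟩
    have : G.Adj u v := hT.1 (by simpa using h)
    exact this.ne
  have hR : ∀ v a, kfR (T.erase s(u, v)) a u ↔ (H.deleteEdges {s(u, v)}).Reachable a u := by
    intro v a
    unfold kfR
    rw [hH, SimpleGraph.deleteEdges_fromEdgeSet, Finset.coe_erase]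
  have hcount : ∀ a, ∑ v, (if s(u, v) ∈ T then
      (if kfR (T.erase s(u, v)) a u then (0:ℝ) else 1) else 0) = if u = a then 0 else 1 := by
    intro a
    by_cases hua : u = a
    · subst hua
      have : ∀ v, kfR (T.erase s(u, v)) u u := fun v => SimpleGraph.Reachable.refl _
      simp [this]
    · obtain ⟨v, hv, hw⟩ := kf_existsUnique H hT.2 u a hua
      rw [if_neg hua, Finset.sum_eq_single v]
      · rw [if_pos ((hadj v).2 hv), if_neg]
        rw [hR]
        exact (hw v hv).2 rfl
      · intro w _ hwv
        by_cases hm : s(u, w) ∈ T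
        · rw [if_pos hm, if_pos]
          rw [hR]
          by_contra hc
          exact hwv ((hw w ((hadj w).1 hm)).1 hc)
        · rw [if_neg hm]
      · intro h; exact absurd (Finset.mem_univ _) h
  have : ∀ v, kfPathFlow x y T u v =
      (if s(u, v) ∈ T then (if kfR (T.erase s(u, v)) y u then (0:ℝ) else 1) else 0) -
      (if s(u, v) ∈ T then (if kfR (T.erase s(u, v)) x u then (0:ℝ) else 1) else 0) := by
    intro v
    unfold kfPathFlow
    split_ifs <;> norm_num
  simp only [this, Finset.sum_sub_distrib, hcount]
  split_ifs <;> norm_num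

open scoped Classical in
/-- The current: `N` times the minimal-energy flow. -/
noncomputable def kfCur (G : SimpleGraph V) (x y : V) (N : ℝ) (u v : V) : ℝ :=
  if G.Adj u v then (kfPot G x y u - kfPot G x y v) / N else 0

lemma kf_inner (G : SimpleGraph V) (x y : V) (hxy : G.Adj x y) (N : ℝ) (φ : V → V → ℝ)
    (hφ : IsUnitFlow G x y φ) :
    ∑ u, ∑ v, kfCur G x y N u v * φ u v = 2 * kfCur G x y N x y := by
  obtain ⟨hanti, hoff, hnode, hx⟩ := hφ
  set h := kfPot G x y with hh
  have htot : ∑ u, ∑ v, φ u v = 0 := by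
    have h1 : ∑ u, ∑ v, φ u v = - ∑ u, ∑ v, φ u v := by
      conv_lhs => rw [Finset.sum_comm]
      simp only [← Finset.sum_neg_distrib]
      exact Finset.sum_congr rfl fun a _ => Finset.sum_congr rfl fun b _ => hanti b a
    linarith
  have hdiv : ∀ f : V → ℝ, ∑ u, f u * ∑ v, φ u v = f x - f y := by
    have hs : ∀ f : V → ℝ, ∑ u, f u * ∑ v, φ u v = f x * ∑ v, φ x v + f y * ∑ v, φ y v := by
      intro f
      refine Finset.sum_eq_add_of_mem x y (Finset.mem_univ _) (Finset.mem_univ _) hxy.ne ?_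
      rintro c - ⟨h1, h2⟩
      rw [hnode c h1 h2, mul_zero]
    have h1 := hs (fun _ => 1)
    simp only [one_mul] at h1
    intro f
    rw [hs f, hx]
    have : ∑ v, φ y v = -1 := by linarith
    rw [this]; ring
  have e1 : ∀ u v, kfCur G x y N u v * φ u v = h u / N * φ u v + h v / N * φ v u := by
    intro u v
    unfold kfCur
    by_cases ha : G.Adj u v
    · rw [if_pos ha, hanti v u]; ring
    · rw [hoff u v ha, hoff v u (fun h => ha h.symm)]; ring
  simp only [e1, Finset.sum_add_distrib]
  rw [Finset.sum_comm (f := fun u v => h v / N * φ v u)]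
  simp only [← Finset.mul_sum]
  rw [hdiv (fun u => h u / N), kfCur, if_pos hxy]
  ring

open scoped Classical in
/-- **Kirchhoff's effective-resistance formula**: the number of spanning trees
containing the edge `{x,y}` equals `R_eff(x ↔ y)` times the total number of
spanning trees; equivalently, a uniform spanning tree contains `{x,y}` with
probability `R_eff(x ↔ y)`. -/
theorem kirchhoff_formula (G : SimpleGraph V) (hG : G.Connected)
    (x y : V) (hxy : G.Adj x y) :
    ((Finset.univ.filter
        (fun T : Finset (Sym2 V) => IsSpanningTree G T ∧ s(x, y) ∈ T)).card : ℝ) =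
      effRes G x y *
        ((Finset.univ.filter
          (fun T : Finset (Sym2 V) => IsSpanningTree G T)).card : ℝ) := by
  set S := Finset.univ.filter (fun T : Finset (Sym2 V) => IsSpanningTree G T) with hS
  set N : ℝ := (S.card : ℝ) with hN
  have hNpos : 0 < N := by
    rw [hN, Nat.cast_pos, Finset.card_pos]
    obtain ⟨T, hT, htree⟩ := hG.exists_isTree_le
    refine ⟨T.edgeSet.toFinset, ?_⟩
    rw [hS, Finset.mem_filter]
    refine ⟨Finset.mem_univ _, ?_, ?_⟩
    · rw [Set.coe_toFinset]
      exact SimpleGraph.edgeSet_mono hT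
    · rw [Set.coe_toFinset, SimpleGraph.fromEdgeSet_edgeSet]
      exact htree
  have hcur : ∀ u v, kfCur G x y N u v = (∑ T ∈ S, kfPathFlow x y T u v) / N := by
    intro u v
    unfold kfCur
    split_ifs with ha
    · rw [kf_pot_sub G x y u v ha]
    · rw [Finset.sum_eq_zero, zero_div]
      intro T hT
      rw [hS, Finset.mem_filter] at hT
      unfold kfPathFlow
      rw [if_neg]
      intro hm
      exact ha (hT.2.1 (by simpa using hm))
  have hnode : ∀ u, ∑ v, kfCur G x y N u v =
      (if u = x then 1 else 0) - (if u = y then 1 else 0) := by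
    intro u
    simp only [hcur]
    rw [← Finset.sum_div, Finset.sum_comm, Finset.sum_congr rfl
      (fun T hT => kf_path_node G x y T (Finset.mem_filter.mp hT).2 u), Finset.sum_const,
      nsmul_eq_mul, ← hN]
    field_simp
  have hflow : IsUnitFlow G x y (kfCur G x y N) := by
    refine ⟨?_, ?_, ?_, ?_⟩
    · intro u v
      unfold kfCur
      by_cases ha : G.Adj u v
      · rw [if_pos ha, if_pos ha.symm]; ring
      · rw [if_neg ha, if_neg (fun h => ha h.symm), neg_zero]
    · intro u v ha
      unfold kfCur
      rw [if_neg ha]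
    · intro u h1 h2
      rw [hnode, if_neg h1, if_neg h2, sub_zero]
    · rw [hnode, if_pos rfl, if_neg hxy.ne, sub_zero]
  have hEself : flowEnergy (kfCur G x y N) = kfCur G x y N x y := by
    have := kf_inner G x y hxy N _ hflow
    unfold flowEnergy
    simp only [pow_two]
    rw [this]; ring
  have hle : ∀ φ, IsUnitFlow G x y φ → kfCur G x y N x y ≤ flowEnergy φ := by
    intro φ hφ
    have h1 := kf_inner G x y hxy N φ hφ
    have h2 := kf_inner G x y hxy N _ hflow
    have h3 : 0 ≤ ∑ u, ∑ v, (φ u v - kfCur G x y N u v) ^ 2 :=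
      Finset.sum_nonneg fun u _ => Finset.sum_nonneg fun v _ => sq_nonneg _
    have h4 : ∑ u, ∑ v, (φ u v - kfCur G x y N u v) ^ 2 =
        ∑ u, ∑ v, φ u v ^ 2 - 2 * ∑ u, ∑ v, kfCur G x y N u v * φ u v
          + ∑ u, ∑ v, kfCur G x y N u v * kfCur G x y N u v := by
      simp only [Finset.mul_sum, ← Finset.sum_sub_distrib, ← Finset.sum_add_distrib]
      exact Finset.sum_congr rfl fun u _ => Finset.sum_congr rfl fun v _ => by ring
    unfold flowEnergy
    linarith
  have heff : effRes G x y = kfCur G x y N x y := by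
    unfold effRes
    refine IsLeast.csInf_eq ⟨⟨_, hflow, hEself.symm⟩, ?_⟩
    rintro E ⟨φ, hφ, rfl⟩
    exact hle φ hφ
  rw [heff, hcur, div_mul_cancel₀ _ hNpos.ne']
  have hval : ∀ T ∈ S, kfPathFlow x y T x y = if s(x, y) ∈ T then 1 else 0 := by
    intro T hT
    rw [hS, Finset.mem_filter] at hT
    unfold kfPathFlow
    by_cases hm : s(x, y) ∈ T
    · have hk := (kf_insert_iff G (T.erase s(x, y)) x y hxy).1
        ⟨Finset.notMem_erase _ _, by rw [Finset.insert_erase hm]; exact hT.2⟩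
      have h1 : kfR (T.erase s(x, y)) x x := SimpleGraph.Reachable.refl _
      have h2 : ¬ kfR (T.erase s(x, y)) y x := fun h => hk.2 (SimpleGraph.Reachable.symm h)
      rw [if_pos hm, if_pos hm, if_pos h1, if_neg h2, sub_zero]
    · rw [if_neg hm, if_neg hm]
  rw [Finset.sum_congr rfl hval, Finset.sum_boole, hS, Finset.filter_filter]
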